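/- arXiv:2107.08279 — 2 statements merged into one kernel-verified Lean document; each statement's English description precedes it below -/
import Mathlib

section
/- Let p and q be distinct prime numbers and n = p·q. For every natural number a coprime to n, a^{n·lcm(p−1, q−1)} ≡ 1 (mod n²). -/
theorem paillier_aux (p a m : ℕ) (hp : p.Prime) (ha : Nat.Coprime a p)
    (hm : p * (p - 1) ∣ m) : a ^ m ≡ 1 [MOD p ^ 2] := by
  obtain ⟨k, rfl⟩ := hm
  have h := Nat.ModEq.pow_totient (Nat.Coprime.pow_right 2 ha)
  rw [Nat.totient_prime_pow hp (by norm_num)] at h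
  have h2 := h.pow k
  simpa [← pow_mul] using h2

/-- Exponent fact for Paillier: `n·λ` annihilates every unit modulo `n²`,
i.e. for `a` coprime to `n = p·q`, `a^{n·lcm(p−1, q−1)} ≡ 1 (mod n²)`. -/
theorem paillier_unit_exponent (p q : ℕ) (hp : p.Prime) (hq : q.Prime)
    (hpq : p ≠ q) (n : ℕ) (hn : n = p * q) (a : ℕ) (ha : Nat.Coprime a n) :
    a ^ (n * Nat.lcm (p - 1) (q - 1)) ≡ 1 [MOD n ^ 2] := by
  subst hn
  have hc : Nat.Coprime (p ^ 2) (q ^ 2) :=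
    Nat.Coprime.pow 2 2 ((Nat.coprime_primes hp hq).2 hpq)
  rw [mul_pow]
  refine (Nat.modEq_and_modEq_iff_modEq_mul hc).1 ⟨?_, ?_⟩
  · exact paillier_aux p a _ hp (ha.coprime_dvd_right (Dvd.intro _ rfl))
      (mul_dvd_mul (Dvd.intro _ rfl) (Nat.dvd_lcm_left _ _))
  · exact paillier_aux q a _ hq (ha.coprime_dvd_right (Dvd.intro_left _ rfl))
      (mul_dvd_mul (Dvd.intro_left _ rfl) (Nat.dvd_lcm_right _ _))
end

section
/- Let p and q be distinct prime numbers, n = p·q, and λ = lcm(p−1, q−1). For every natural number m and every natural number r coprime to n, ((1 + n)^m · r^n)^λ ≡ 1 + m·λ·n (mod n²). (This is the correctness of Paillier decryption: raising the ciphertext c = g^m r^n with g = 1+n to the secret exponent λ yields an element of the form 1 + m·λ·n modulo n², from which m is recovered via the function L(x) = (x−1)/n.) -/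
lemma aux_binom (x : ℤ) (k : ℕ) : x ^ 2 ∣ (1 + x) ^ k - (1 + k * x) := by
  induction k with
  | zero => simp
  | succ k ih =>
    obtain ⟨c, hc⟩ := ih
    refine ⟨c * (1 + x) + k, ?_⟩
    have : (1 + x) ^ k = 1 + k * x + x ^ 2 * c := by linarith
    rw [pow_succ, this]
    push_cast
    ring

lemma aux_fermat (p r l : ℕ) (hp : p.Prime) (hr : Nat.Coprime r p) (h : p - 1 ∣ l) :
    r ^ l ≡ 1 [MOD p] := by
  obtain ⟨t, rfl⟩ := h
  have h1 := Nat.ModEq.pow_totient hr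
  rw [Nat.totient_prime hp] at h1
  have h2 := h1.pow t
  rwa [one_pow, ← pow_mul] at h2

/-- Correctness of Paillier decryption: raising the ciphertext
`(1+n)^m · r^n` to the secret exponent `λ = lcm(p−1, q−1)` yields
`1 + m·λ·n` modulo `n²`. -/
theorem paillier_decryption_correct (p q : ℕ) (hp : p.Prime) (hq : q.Prime)
    (hpq : p ≠ q) (n : ℕ) (hn : n = p * q)
    (lam : ℕ) (hlam : lam = Nat.lcm (p - 1) (q - 1))
    (m r : ℕ) (hr : Nat.Coprime r n) :
    ((1 + n) ^ m * r ^ n) ^ lam ≡ 1 + m * lam * n [MOD n ^ 2] := by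
  have hrl : r ^ lam ≡ 1 [MOD n] := by
    subst hn
    refine (Nat.modEq_and_modEq_iff_modEq_mul ((Nat.coprime_primes hp hq).2 hpq)).1 ⟨?_, ?_⟩
    · exact aux_fermat p r lam hp hr.coprime_mul_right_right (hlam ▸ Nat.dvd_lcm_left _ _)
    · exact aux_fermat q r lam hq hr.coprime_mul_left_right (hlam ▸ Nat.dvd_lcm_right _ _)
  have h1 : (r ^ lam) ^ n ≡ 1 [MOD n ^ 2] := by
    obtain ⟨k, hk⟩ := Nat.modEq_iff_dvd.1 hrl.symm
    apply Nat.ModEq.symm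
    rw [Nat.modEq_iff_dvd]
    push_cast at hk ⊢
    have e : (r : ℤ) ^ lam = 1 + n * k := by linarith
    rw [e]
    obtain ⟨c, hc⟩ := aux_binom (n * k) n
    exact ⟨k ^ 2 * c + k, by linear_combination hc⟩
  have h2 : (1 + n) ^ (m * lam) ≡ 1 + m * lam * n [MOD n ^ 2] := by
    apply Nat.ModEq.symm
    rw [Nat.modEq_iff_dvd]
    have := aux_binom n (m * lam)
    push_cast at this ⊢
    exact this
  have h3 := h2.mul h1
  rw [mul_one] at h3
  rwa [mul_pow, ← pow_mul, ← pow_mul, mul_comm n lam, pow_mul r]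
end
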